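/- Let G be a grid diagram of size n, and let C^-(G) be the grid complex over R = (ℤ/2)[U_1, …, U_n] with differential ∂x = Σ_y Σ_r U_1^{O_1(r)} ⋯ U_n^{O_n(r)} · y, summing over empty rectangles r from x to y with no X-marking in their interior. If the indices i and j lie in the same orbit of the permutation σ_X^{-1} ∘ σ_O of ℤ/n (i.e., the O-markings O_i and O_j lie on the same component of the link presented by G), then multiplication by U_i and multiplication by U_j are chain-homotopic R-linear endomorphisms of C^-(G); in particular, U_i and U_j induce the same endomorphism of the homology H_*(C^-(G)). -/

import Mathlib

/-!
STATEMENT 6. If the indices `i` and `j` lie in the same orbit of the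
permutation `σX⁻¹ ∘ σO` of `ZMod n` (i.e. the markings `O_i` and `O_j` lie on
the same component of the link presented by the grid diagram `G`), then
multiplication by `U_i` and multiplication by `U_j` are chain-homotopic
`R`-linear endomorphisms of the grid complex `C⁻(G)` over
`R = (ℤ/2)[U_1, …, U_n]`; in particular, `U_i` and `U_j` induce the same
endomorphism of the homology `H_*(C⁻(G))` (formalized concretely: `U_i − U_j`
sends cycles to boundaries).
-/

namespace GridDiagrams

attribute [local instance] Classical.propDecidable

variable {n : ℕ}

/-- `c` lies in the cyclic half-open interval `[a, b)` in `ZMod n`. -/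
def cycIco (a b c : ZMod n) : Prop := (c - a).val < (b - a).val

/-- `c` lies in the open cyclic interval `(a, b)` in `ZMod n`. -/
def cycIoo (a b c : ZMod n) : Prop := 0 < (c - a).val ∧ (c - a).val < (b - a).val

/-- The set of squares making up the rectangle determined by the generator `x`
and the ordered pair of columns `(a, b)`. -/
def rectSquares (x : Equiv.Perm (ZMod n)) (a b : ZMod n) : Set (ZMod n × ZMod n) :=
  {q | cycIco a b q.1 ∧ cycIco (x a) (x b) q.2}

/-- The lattice points in the open interior of the rectangle determined by `x`
and the ordered pair of columns `(a, b)`. -/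
def rectInterior (x : Equiv.Perm (ZMod n)) (a b : ZMod n) : Set (ZMod n × ZMod n) :=
  {q | cycIoo a b q.1 ∧ cycIoo (x a) (x b) q.2}

/-- The ordered pair `(a, b)` determines a rectangle from `x` to `y`. -/
def IsRect (x y : Equiv.Perm (ZMod n)) (a b : ZMod n) : Prop :=
  a ≠ b ∧ y = x * Equiv.swap a b

/-- The ordered pair `(a, b)` determines an empty rectangle from `x` to `y`. -/
def IsEmptyRect (x y : Equiv.Perm (ZMod n)) (a b : ZMod n) : Prop :=
  IsRect x y a b ∧ ∀ i : ZMod n, (i, x i) ∉ rectInterior x a b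

/-- The empty rectangle determined by `(a, b)` from `x` to `y` counts in the
differential: additionally, no `X`-marking lies in its interior. -/
def CountsInDiff (σX : Equiv.Perm (ZMod n)) (x y : Equiv.Perm (ZMod n))
    (a b : ZMod n) : Prop :=
  IsEmptyRect x y a b ∧ ∀ i : ZMod n, (i, σX i) ∉ rectSquares x a b

/-- `O_i(r) ∈ {0, 1}`: whether the `i`-th `O`-marking lies in the interior of
the rectangle determined by `x` and `(a, b)`. -/
noncomputable def Ocount (σO : Equiv.Perm (ZMod n)) (x : Equiv.Perm (ZMod n))
    (a b i : ZMod n) : ℕ :=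
  if (i, σO i) ∈ rectSquares x a b then 1 else 0

/-- The ground ring `(ℤ/2)[U_1, …, U_n]`, with one variable per column. -/
abbrev GridRing (n : ℕ) := MvPolynomial (ZMod n) (ZMod 2)

/-- The grid complex `C⁻(G)`: the free `(ℤ/2)[U_1, …, U_n]`-module with basis
the generators of `G`. -/
abbrev GridC (n : ℕ) := Equiv.Perm (ZMod n) →₀ GridRing n

/-- The monomial `U_1^{O_1(r)} ⋯ U_n^{O_n(r)}` attached to the rectangle
determined by `x` and `(a, b)`. -/
noncomputable def Omonomial [NeZero n] (σO : Equiv.Perm (ZMod n))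
    (x : Equiv.Perm (ZMod n)) (a b : ZMod n) : GridRing n :=
  ∏ i : ZMod n, (MvPolynomial.X i : GridRing n) ^ Ocount σO x a b i

/-- The value of the differential on the generator `x`:
`∂x = Σ_y Σ_r U_1^{O_1(r)} ⋯ U_n^{O_n(r)} · y`. -/
noncomputable def diffImage [NeZero n] (σO σX : Equiv.Perm (ZMod n))
    (x : Equiv.Perm (ZMod n)) : GridC n :=
  ∑ y : Equiv.Perm (ZMod n), ∑ a : ZMod n, ∑ b : ZMod n,
    if CountsInDiff σX x y a b then Finsupp.single y (Omonomial σO x a b) else 0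

/-- The differential `∂` of the grid complex `C⁻(G)`, as a
`(ℤ/2)[U_1, …, U_n]`-linear endomorphism. -/
noncomputable def gridDiff [NeZero n] (σO σX : Equiv.Perm (ZMod n)) :
    GridC n →ₗ[GridRing n] GridC n :=
  Finsupp.lsum (GridRing n) fun x =>
    LinearMap.toSpanSingleton (GridRing n) (GridC n) (diffImage σO σX x)

/-- Multiplication by the variable `U_i`, as an endomorphism of `C⁻(G)`. -/
noncomputable def Umul (n : ℕ) (i : ZMod n) : GridC n →ₗ[GridRing n] GridC n :=
  (MvPolynomial.X i : GridRing n) • LinearMap.id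

section aux
set_option linter.all false
set_option linter.unusedSectionVars false
set_option linter.unusedSimpArgs false
variable [NeZero n]

lemma val_sub_ite (a c : ZMod n) :
    (c - a).val = if a.val ≤ c.val then c.val - a.val else n + c.val - a.val := by
  split_ifs with h
  · exact ZMod.val_sub h
  · have ha := ZMod.val_lt a
    have hc := ZMod.val_lt c
    have h1 : (c - a) = ((n + c.val - a.val : ℕ) : ZMod n) := by
      rw [Nat.cast_sub (by omega)]
      simp
    rw [h1, ZMod.val_cast_of_lt (by omega)]

lemma val_ne {a b : ZMod n} (h : a ≠ b) : a.val ≠ b.val := fun h' => h (ZMod.val_injective n h')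

noncomputable def ci (a b c : ZMod n) : ℕ := if cycIco a b c then 1 else 0

lemma ci_add {a b c : ZMod n} (h : cycIoo a c b) (k : ZMod n) :
    ci a c k = ci a b k + ci b c k := by
  have ha := ZMod.val_lt a
  have hb := ZMod.val_lt b
  have hc := ZMod.val_lt c
  have hk := ZMod.val_lt k
  simp only [ci, cycIco, cycIoo, val_sub_ite] at *
  split_ifs at * <;> omega

lemma ci_compl {a b : ZMod n} (h : a ≠ b) (k : ZMod n) : ci a b k + ci b a k = 1 := by
  have h := val_ne h
  have ha := ZMod.val_lt a
  have hb := ZMod.val_lt b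
  have hk := ZMod.val_lt k
  simp only [ci, cycIco, val_sub_ite] at *
  split_ifs at * <;> omega

lemma ioo_iff {a b k : ZMod n} (h : k ≠ a) : cycIoo a b k ↔ cycIco a b k := by
  have h := val_ne h
  have ha := ZMod.val_lt a
  have hk := ZMod.val_lt k
  simp only [cycIco, cycIoo, val_sub_ite] at *
  split_ifs at * <;> omega

lemma ioo_left (a b : ZMod n) : ¬ cycIoo a b a := by simp [cycIoo]
lemma ioo_right (a b : ZMod n) : ¬ cycIoo a b b := by simp [cycIoo]

lemma ioo_not {a b c : ZMod n} (h1 : a ≠ b) (h2 : a ≠ c) (h3 : b ≠ c) :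
    cycIoo a b c ↔ ¬ cycIoo a c b := by
  have h1 := val_ne h1
  have h2 := val_ne h2
  have h3 := val_ne h3
  have ha := ZMod.val_lt a
  have hb := ZMod.val_lt b
  have hc := ZMod.val_lt c
  simp only [cycIoo, val_sub_ite] at *
  split_ifs at * <;> omega

lemma ioo_rot {a b c : ZMod n} : cycIoo a c b ↔ cycIoo b a c := by
  have ha := ZMod.val_lt a
  have hb := ZMod.val_lt b
  have hc := ZMod.val_lt c
  simp only [cycIoo, val_sub_ite] at *
  split_ifs at * <;> omega

lemma ioo_four {a b c d : ZMod n} (h1 : a ≠ b) (h2 : a ≠ c) (h3 : a ≠ d) (h4 : b ≠ c)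
    (h5 : b ≠ d) (h6 : c ≠ d) :
    ((cycIoo c d a ∧ ¬ cycIoo c d b) ↔ (cycIoo a b d ∧ ¬ cycIoo a b c)) := by
  have h1 := val_ne h1
  have h2 := val_ne h2
  have h3 := val_ne h3
  have h4 := val_ne h4
  have h5 := val_ne h5
  have h6 := val_ne h6
  have ha := ZMod.val_lt a
  have hb := ZMod.val_lt b
  have hc := ZMod.val_lt c
  have hd := ZMod.val_lt d
  simp only [cycIoo, val_sub_ite] at *
  split_ifs at * <;> omega

lemma ioo_four' {a b c d : ZMod n} (h1 : a ≠ b) (h2 : a ≠ c) (h3 : a ≠ d) (h4 : b ≠ c)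
    (h5 : b ≠ d) (h6 : c ≠ d) :
    ((cycIoo c d b ∧ ¬ cycIoo c d a) ↔ (cycIoo a b c ∧ ¬ cycIoo a b d)) := by
  have h1 := val_ne h1
  have h2 := val_ne h2
  have h3 := val_ne h3
  have h4 := val_ne h4
  have h5 := val_ne h5
  have h6 := val_ne h6
  have ha := ZMod.val_lt a
  have hb := ZMod.val_lt b
  have hc := ZMod.val_lt c
  have hd := ZMod.val_lt d
  simp only [cycIoo, val_sub_ite] at *
  split_ifs at * <;> omega

lemma ci_single {a b m : ZMod n} (hab : a ≠ b) (h : ∀ k, ci a b k = if k = m then 1 else 0) :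
    a = m ∧ b = m + 1 := by
  have hn : 1 < n := by
    have := val_ne hab
    have ha := ZMod.val_lt a
    have hb := ZMod.val_lt b
    omega
  haveI : Fact (1 < n) := ⟨hn⟩
  have h1 : 0 < (b - a).val := by
    rw [Nat.pos_iff_ne_zero, Ne, ZMod.val_eq_zero, sub_eq_zero]; exact hab.symm
  have ham : a = m := by
    have := h a
    by_contra hne
    rw [if_neg hne] at this
    simp only [ci, cycIco, sub_self, ZMod.val_zero, h1, if_true] at this
    omega
  subst ham
  refine ⟨rfl, ?_⟩
  have h2 := h (a + 1)
  have h3 : a + 1 ≠ a := by simp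
  rw [if_neg h3] at h2
  simp only [ci, cycIco, add_sub_cancel_left, ZMod.val_one] at h2
  have h4 : (b - a).val = 1 := by
    split_ifs at h2
    omega
  have : b - a = 1 := by
    apply ZMod.val_injective n; rw [h4, ZMod.val_one]
  rw [← this]; ring

lemma ci_succ (hn : 1 < n) (m k : ZMod n) : ci m (m+1) k = if k = m then 1 else 0 := by
  haveI : Fact (1 < n) := ⟨hn⟩
  simp only [ci, cycIco, add_sub_cancel_left, ZMod.val_one, Nat.lt_one_iff, ZMod.val_eq_zero,
    sub_eq_zero]

lemma ioo_succ (hn : 1 < n) (m k : ZMod n) : ¬ cycIoo m (m+1) k := by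
  haveI : Fact (1 < n) := ⟨hn⟩
  simp only [cycIoo, add_sub_cancel_left, ZMod.val_one]
  omega

/-- emptiness -/
def Emp (x : Equiv.Perm (ZMod n)) (a b : ZMod n) : Prop :=
  ∀ k, ¬ (cycIoo a b k ∧ cycIoo (x a) (x b) (x k))

noncomputable def Rm (x : Equiv.Perm (ZMod n)) (a b : ZMod n) (q : ZMod n × ZMod n) : ℕ :=
  ci a b q.1 * ci (x a) (x b) q.2

noncomputable def wt (σO : Equiv.Perm (ZMod n)) (f : ZMod n × ZMod n → ℕ) : GridRing n :=
  ∏ i : ZMod n, (MvPolynomial.X i : GridRing n) ^ f (i, σO i)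

lemma wt_add (σO : Equiv.Perm (ZMod n)) (f g : ZMod n × ZMod n → ℕ) :
    wt σO (f + g) = wt σO f * wt σO g := by
  simp [wt, pow_add, Finset.prod_mul_distrib]

def xv (σX : Equiv.Perm (ZMod n)) (f : ZMod n × ZMod n → ℕ) : ZMod n → ℕ := fun k => f (k, σX k)

noncomputable def opI (σO σX : Equiv.Perm (ZMod n)) (v : ZMod n → ℕ)
    (x : Equiv.Perm (ZMod n)) : GridC n :=
  ∑ a : ZMod n, ∑ b : ZMod n,
    if a ≠ b ∧ Emp x a b ∧ xv σX (Rm x a b) = v then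
      Finsupp.single (x * Equiv.swap a b) (wt σO (Rm x a b)) else 0

noncomputable def op (σO σX : Equiv.Perm (ZMod n)) (v : ZMod n → ℕ) :
    GridC n →ₗ[GridRing n] GridC n :=
  Finsupp.lsum (GridRing n) fun x =>
    LinearMap.toSpanSingleton (GridRing n) (GridC n) (opI σO σX v x)

lemma Rm_eq (x : Equiv.Perm (ZMod n)) (a b : ZMod n) (q) :
    Rm x a b q = if q ∈ rectSquares x a b then 1 else 0 := by
  simp only [Rm, ci, rectSquares, Set.mem_setOf_eq]
  by_cases h1 : cycIco a b q.1 <;> by_cases h2 : cycIco (x a) (x b) q.2 <;> simp [h1, h2]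

lemma gridDiff_eq (σO σX : Equiv.Perm (ZMod n)) : gridDiff σO σX = op σO σX 0 := by
  unfold gridDiff op
  congr 1
  funext x
  congr 1
  unfold diffImage opI
  rw [Finset.sum_comm]
  refine Finset.sum_congr rfl fun a _ => ?_
  rw [Finset.sum_comm]
  refine Finset.sum_congr rfl fun b _ => ?_
  rw [Finset.sum_eq_single (x * Equiv.swap a b)]
  · have hw : Omonomial σO x a b = wt σO (Rm x a b) := by
      simp only [Omonomial, wt, Rm_eq, Ocount]
    rw [hw]
    refine if_congr ?_ rfl rfl
    simp only [CountsInDiff, IsEmptyRect, IsRect, and_true, Emp, rectInterior, Set.mem_setOf_eq,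
      funext_iff, xv, Rm_eq, Pi.zero_apply, ite_eq_right_iff, one_ne_zero, imp_false, and_assoc]
  · intro y _ hy
    rw [if_neg]
    rintro ⟨⟨⟨_, h⟩, _⟩, _⟩
    exact hy h
  · simp

/-- pairs of rectangles -/
def Valid (x : Equiv.Perm (ZMod n)) (a b c d : ZMod n) : Prop :=
  a ≠ b ∧ c ≠ d ∧ Emp x a b ∧ Emp (x * Equiv.swap a b) c d

noncomputable def Dm (x : Equiv.Perm (ZMod n)) (a b c d : ZMod n) : ZMod n × ZMod n → ℕ :=
  Rm x a b + Rm (x * Equiv.swap a b) c d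

noncomputable def T (σO σX : Equiv.Perm (ZMod n)) (j : ZMod n)
    (x : Equiv.Perm (ZMod n)) (a b c d : ZMod n) : GridC n :=
  if Valid x a b c d ∧ xv σX (Dm x a b c d) = Pi.single j 1 then
    Finsupp.single (x * Equiv.swap a b * Equiv.swap c d) (wt σO (Dm x a b c d)) else 0

lemma op_single (σO σX : Equiv.Perm (ZMod n)) (v x) (r : GridRing n) :
    op σO σX v (Finsupp.single x r) = r • opI σO σX v x := by
  simp [op]

lemma add_single (j : ZMod n) (f g : ZMod n → ℕ) :
    f + g = Pi.single j 1 ↔ (f = Pi.single j 1 ∧ g = 0) ∨ (f = 0 ∧ g = Pi.single j 1) := by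
  constructor
  · intro h
    have h' : ∀ k, f k + g k = if k = j then 1 else 0 := by
      intro k
      have := congrFun h k
      simpa [Pi.single_apply] using this
    have hj := h' j
    simp only [if_true] at hj
    rcases Nat.eq_zero_or_pos (f j) with h0 | h0
    · right
      constructor <;> funext k <;> have hk := h' k <;> by_cases e : k = j
      · subst e; simpa using h0
      · rw [if_neg e] at hk; simp; omega
      · subst e; simp; omega
      · rw [if_neg e] at hk; simp [Pi.single_apply, e]; omega
    · left
      constructor <;> funext k <;> have hk := h' k <;> by_cases e : k = j
      · subst e; simp; omega
      · rw [if_neg e] at hk; simp [Pi.single_apply, e]; omega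
      · subst e; simp; omega
      · rw [if_neg e] at hk; simp; omega
  · rintro (⟨h1, h2⟩ | ⟨h1, h2⟩) <;> simp [h1, h2]

lemma op_opI (σO σX : Equiv.Perm (ZMod n)) (v w x) :
    op σO σX w (opI σO σX v x) = ∑ a, ∑ b, ∑ c, ∑ d,
      if Valid x a b c d ∧ (xv σX (Rm x a b) = v ∧ xv σX (Rm (x * Equiv.swap a b) c d) = w) then
        Finsupp.single (x * Equiv.swap a b * Equiv.swap c d) (wt σO (Dm x a b c d)) else 0 := by
  conv_lhs => rw [opI]
  simp only [map_sum]
  refine Finset.sum_congr rfl fun a _ => Finset.sum_congr rfl fun b _ => ?_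
  by_cases h : a ≠ b ∧ Emp x a b ∧ xv σX (Rm x a b) = v
  · rw [if_pos h, op_single, opI, Finset.smul_sum]
    refine Finset.sum_congr rfl fun c _ => ?_
    rw [Finset.smul_sum]
    refine Finset.sum_congr rfl fun d _ => ?_
    rw [smul_ite, smul_zero, Finsupp.smul_single, smul_eq_mul, ← wt_add]
    refine if_congr ?_ rfl rfl
    unfold Valid
    tauto
  · rw [if_neg h, map_zero]
    symm
    refine Finset.sum_eq_zero fun c _ => Finset.sum_eq_zero fun d _ => ?_
    rw [if_neg]
    unfold Valid
    tauto

lemma op_sum (σO σX : Equiv.Perm (ZMod n)) (j x) :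
    op σO σX 0 (opI σO σX (Pi.single j 1) x) + op σO σX (Pi.single j 1) (opI σO σX 0 x)
      = ∑ a, ∑ b, ∑ c, ∑ d, T σO σX j x a b c d := by
  rw [op_opI, op_opI]
  simp only [← Finset.sum_add_distrib]
  refine Finset.sum_congr rfl fun a _ => Finset.sum_congr rfl fun b _ =>
    Finset.sum_congr rfl fun c _ => Finset.sum_congr rfl fun d _ => ?_
  unfold T
  have hxv : xv σX (Dm x a b c d) = xv σX (Rm x a b) + xv σX (Rm (x * Equiv.swap a b) c d) := rfl
  have hne : (Pi.single j 1 : ZMod n → ℕ) ≠ 0 := by simp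
  rw [hxv]
  simp only [add_single]
  by_cases hV : Valid x a b c d
  · simp only [hV, true_and]
    by_cases h1 : xv σX (Rm x a b) = 0
    · simp [h1, hne.symm, hne]
    · simp [h1]
  · simp [hV]

lemma ci_eq_zero {a b k : ZMod n} (h : k ≠ a) : ci a b k = 0 ↔ ¬ cycIoo a b k := by
  rw [ioo_iff h, ci]; split_ifs <;> simp_all

/-- Validity, with emptiness away from a set of special columns read off from the domain. -/
lemma valid_iff (x : Equiv.Perm (ZMod n)) (a b c d : ZMod n) (S : ZMod n → Prop)
    (ha : S a) (hb : S b) (hc : S c) (hd : S d) :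
    Valid x a b c d ↔ a ≠ b ∧ c ≠ d ∧
      (∀ k, S k → ¬ (cycIoo a b k ∧ cycIoo (x a) (x b) (x k))) ∧
      (∀ k, S k → ¬ (cycIoo c d k ∧ cycIoo ((x * Equiv.swap a b) c) ((x * Equiv.swap a b) d)
        ((x * Equiv.swap a b) k))) ∧
      (∀ k, ¬ S k → Dm x a b c d (k, x k) = 0) := by
  unfold Valid Emp
  have key : ∀ k, ¬ S k → (Dm x a b c d (k, x k) = 0 ↔
      ¬ (cycIoo a b k ∧ cycIoo (x a) (x b) (x k)) ∧
      ¬ (cycIoo c d k ∧ cycIoo ((x * Equiv.swap a b) c) ((x * Equiv.swap a b) d)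
        ((x * Equiv.swap a b) k))) := by
    intro k hk
    have hka : k ≠ a := fun h => hk (h ▸ ha)
    have hkb : k ≠ b := fun h => hk (h ▸ hb)
    have hkc : k ≠ c := fun h => hk (h ▸ hc)
    have hyk : (x * Equiv.swap a b) k = x k := by
      rw [Equiv.Perm.mul_apply, Equiv.swap_apply_of_ne_of_ne hka hkb]
    have h1 : x k ≠ x a := fun h => hka (x.injective h)
    have h2 : x k ≠ (x * Equiv.swap a b) c := fun h => hkc (by
      rw [← hyk] at h; exact (x * Equiv.swap a b).injective h)
    rw [hyk]
    simp only [Dm, Rm, Pi.add_apply, Nat.add_eq_zero_iff, mul_eq_zero, ci_eq_zero hka,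
      ci_eq_zero h1, ci_eq_zero h2, ci_eq_zero hkc]
    tauto
  constructor
  · rintro ⟨h1, h2, h3, h4⟩
    exact ⟨h1, h2, fun k _ => h3 k, fun k _ => h4 k, fun k hk => (key k hk).2 ⟨h3 k, h4 k⟩⟩
  · rintro ⟨h1, h2, h3, h4, h5⟩
    refine ⟨h1, h2, fun k => ?_, fun k => ?_⟩ <;> by_cases hk : S k
    · exact h3 k hk
    · exact ((key k hk).1 (h5 k hk)).1
    · exact h4 k hk
    · exact ((key k hk).1 (h5 k hk)).2

lemma T_congr (σO σX : Equiv.Perm (ZMod n)) (j x) {a b c d a' b' c' d' : ZMod n}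
    (hD : Dm x a b c d = Dm x a' b' c' d')
    (hz : Equiv.swap a b * Equiv.swap c d = Equiv.swap a' b' * Equiv.swap c' d')
    (hV : Valid x a b c d ↔ Valid x a' b' c' d') :
    T σO σX j x a b c d = T σO σX j x a' b' c' d' := by
  unfold T
  rw [hD, mul_assoc, hz, mul_assoc]
  exact if_congr (by rw [hV]) rfl rfl

lemma T_zero (σO σX : Equiv.Perm (ZMod n)) (j x) {a b c d : ZMod n} (hV : ¬ Valid x a b c d) :
    T σO σX j x a b c d = 0 := by
  unfold T
  rw [if_neg]
  tauto

lemma bit_congr {P Q : Prop} [Decidable P] [Decidable Q] {s t : GridC n} (h1 : P → Q → s = t) (h2 : P → ¬ Q → s = 0)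
    (h3 : ¬ P → Q → t = 0) : (if P then s else 0) = (if Q then t else 0) := by
  by_cases hP : P <;> by_cases hQ : Q <;> simp [hP, hQ]
  · exact h1 hP hQ
  · exact h2 hP hQ
  · exact (h3 hP hQ).symm

lemma swap3 {p q r : ZMod n} (h1 : p ≠ q) (h2 : p ≠ r) (h3 : q ≠ r) :
    Equiv.swap p r * Equiv.swap p q = Equiv.swap p q * Equiv.swap q r ∧
    Equiv.swap p q * Equiv.swap q r = Equiv.swap q r * Equiv.swap p r ∧
    Equiv.swap p q * Equiv.swap p r = Equiv.swap q r * Equiv.swap p q ∧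
    Equiv.swap q r * Equiv.swap p q = Equiv.swap p r * Equiv.swap q r := by
  refine ⟨?_, ?_, ?_, ?_⟩ <;> ext k <;> simp only [Equiv.Perm.mul_apply, Equiv.swap_apply_def] <;>
    grind

def S3 (p q r k : ZMod n) : Prop := k = p ∨ k = q ∨ k = r

lemma forall_S3 {p q r : ZMod n} {P : ZMod n → Prop} :
    (∀ k, S3 p q r k → P k) ↔ P p ∧ P q ∧ P r := by
  unfold S3
  constructor
  · intro h
    exact ⟨h _ (by simp), h _ (by simp), h _ (by simp)⟩
  · rintro ⟨h1, h2, h3⟩ k (rfl | rfl | rfl) <;> assumption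

section tri
variable (x : Equiv.Perm (ZMod n)) {p q r : ZMod n} (h1 : p ≠ q) (h2 : p ≠ r) (h3 : q ≠ r)

lemma bits (h1 : p ≠ q) (h2 : p ≠ r) (h3 : q ≠ r) :
    (cycIoo p q r ↔ ¬ cycIoo p r q) ∧ (cycIoo q r p ↔ ¬ cycIoo p r q) ∧
    (cycIoo r p q ↔ ¬ cycIoo p r q) ∧ (cycIoo q p r ↔ cycIoo p r q) ∧
    (cycIoo r q p ↔ cycIoo p r q) := by
  have e1 := ioo_not h1 h2 h3
  have e2 := @ioo_rot n _ p q r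
  have e3 := @ioo_rot n _ q r p
  have e4 := @ioo_rot n _ p r q
  have e5 := @ioo_rot n _ r q p
  tauto

lemma vA (h1 : p ≠ q) (h2 : p ≠ r) (h3 : q ≠ r) : Valid x p q p r ↔
    cycIoo (x p) (x r) (x q) ∧ ∀ k, ¬ S3 p q r k → Dm x p q p r (k, x k) = 0 := by
  rw [valid_iff x _ _ _ _ (S3 p q r) (by simp [S3]) (by simp [S3]) (by simp [S3]) (by simp [S3])]
  obtain ⟨b1, b2, b3, b4, b5⟩ := bits h1 h2 h3
  obtain ⟨c1, c2, c3, c4, c5⟩ := bits (x.injective.ne h1) (x.injective.ne h2) (x.injective.ne h3)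
  simp only [forall_S3, Equiv.Perm.mul_apply, Equiv.swap_apply_left, Equiv.swap_apply_right,
    Equiv.swap_apply_of_ne_of_ne h2.symm h3.symm, ioo_left, ioo_right, b1, b2, b3, b4, b5,
    c1, c2, c3, c4, c5]
  clear b1 b2 b3 b4 b5 c1 c2 c3 c4 c5
  generalize cycIoo p r q = A
  generalize cycIoo (x p) (x r) (x q) = B
  generalize (∀ k, ¬ S3 p q r k → _) = G
  simp only [ne_eq, h1, h2, h3, not_false_eq_true, true_and, false_and, and_false, and_true,
    not_true_eq_false]
  grind

lemma vB (h1 : p ≠ q) (h2 : p ≠ r) (h3 : q ≠ r) : Valid x p q q r ↔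
    cycIoo p r q ∧ ∀ k, ¬ S3 p q r k → Dm x p q q r (k, x k) = 0 := by
  rw [valid_iff x _ _ _ _ (S3 p q r) (by simp [S3]) (by simp [S3]) (by simp [S3]) (by simp [S3])]
  obtain ⟨b1, b2, b3, b4, b5⟩ := bits h1 h2 h3
  obtain ⟨c1, c2, c3, c4, c5⟩ := bits (x.injective.ne h1) (x.injective.ne h2) (x.injective.ne h3)
  simp only [forall_S3, Equiv.Perm.mul_apply, Equiv.swap_apply_left, Equiv.swap_apply_right,
    Equiv.swap_apply_of_ne_of_ne h2.symm h3.symm, ioo_left, ioo_right, b1, b2, b3, b4, b5,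
    c1, c2, c3, c4, c5]
  clear b1 b2 b3 b4 b5 c1 c2 c3 c4 c5
  generalize cycIoo p r q = A
  generalize cycIoo (x p) (x r) (x q) = B
  generalize (∀ k, ¬ S3 p q r k → _) = G
  simp only [ne_eq, h1, h2, h3, not_false_eq_true, true_and, false_and, and_false, and_true,
    not_true_eq_false]
  grind

lemma vC (h1 : p ≠ q) (h2 : p ≠ r) (h3 : q ≠ r) : Valid x q r p q ↔
    cycIoo p r q ∧ ∀ k, ¬ S3 p q r k → Dm x q r p q (k, x k) = 0 := by
  rw [valid_iff x _ _ _ _ (S3 p q r) (by simp [S3]) (by simp [S3]) (by simp [S3]) (by simp [S3])]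
  obtain ⟨b1, b2, b3, b4, b5⟩ := bits h1 h2 h3
  obtain ⟨c1, c2, c3, c4, c5⟩ := bits (x.injective.ne h1) (x.injective.ne h2) (x.injective.ne h3)
  simp only [forall_S3, Equiv.Perm.mul_apply, Equiv.swap_apply_left, Equiv.swap_apply_right,
    Equiv.swap_apply_of_ne_of_ne h1 h2, ioo_left, ioo_right, b1, b2, b3, b4, b5,
    c1, c2, c3, c4, c5]
  clear b1 b2 b3 b4 b5 c1 c2 c3 c4 c5
  generalize cycIoo p r q = A
  generalize cycIoo (x p) (x r) (x q) = B
  generalize (∀ k, ¬ S3 p q r k → _) = G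
  simp only [ne_eq, h1, h2, h3, not_false_eq_true, true_and, false_and, and_false, and_true,
    not_true_eq_false]
  grind

lemma vD (h1 : p ≠ q) (h2 : p ≠ r) (h3 : q ≠ r) : Valid x q r p r ↔
    cycIoo (x p) (x r) (x q) ∧ ∀ k, ¬ S3 p q r k → Dm x q r p r (k, x k) = 0 := by
  rw [valid_iff x _ _ _ _ (S3 p q r) (by simp [S3]) (by simp [S3]) (by simp [S3]) (by simp [S3])]
  obtain ⟨b1, b2, b3, b4, b5⟩ := bits h1 h2 h3
  obtain ⟨c1, c2, c3, c4, c5⟩ := bits (x.injective.ne h1) (x.injective.ne h2) (x.injective.ne h3)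
  simp only [forall_S3, Equiv.Perm.mul_apply, Equiv.swap_apply_left, Equiv.swap_apply_right,
    Equiv.swap_apply_of_ne_of_ne h1 h2, ioo_left, ioo_right, b1, b2, b3, b4, b5,
    c1, c2, c3, c4, c5]
  clear b1 b2 b3 b4 b5 c1 c2 c3 c4 c5
  generalize cycIoo p r q = A
  generalize cycIoo (x p) (x r) (x q) = B
  generalize (∀ k, ¬ S3 p q r k → _) = G
  simp only [ne_eq, h1, h2, h3, not_false_eq_true, true_and, false_and, and_false, and_true,
    not_true_eq_false]
  grind

lemma S3_swap (p q r k : ZMod n) : S3 p r q k ↔ S3 p q r k := by unfold S3; tauto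
lemma S3_swap' (p q r k : ZMod n) : S3 q p r k ↔ S3 p q r k := by unfold S3; tauto

variable (σO σX : Equiv.Perm (ZMod n)) (j : ZMod n)

lemma I1 (h1 : p ≠ q) (h2 : p ≠ r) (h3 : q ≠ r) :
    (if cycIoo p r q then T σO σX j x p r p q else 0) =
    (if ¬ cycIoo (x p) (x r) (x q) then T σO σX j x p q q r else 0) := by
  obtain ⟨b1, b2, b3, b4, b5⟩ := bits h1 h2 h3
  obtain ⟨c1, c2, c3, c4, c5⟩ := bits (x.injective.ne h1) (x.injective.ne h2) (x.injective.ne h3)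
  have V := vA x h2 h1 h3.symm
  have V' := vB x h1 h2 h3
  simp only [S3_swap] at V
  refine bit_congr (n := n) (fun hP hQ => ?_) (fun hP hQ => T_zero σO σX j x ?_) (fun hP hQ => T_zero σO σX j x ?_)
  · have hD : Dm x p r p q = Dm x p q q r := by
      funext k
      simp only [Dm, Rm, Pi.add_apply, Equiv.Perm.mul_apply, Equiv.swap_apply_left,
        Equiv.swap_apply_right, Equiv.swap_apply_of_ne_of_ne h1.symm h3,
        Equiv.swap_apply_of_ne_of_ne h2.symm h3.symm]
      rw [ci_add hP, ci_add (c1.2 hQ)]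
      ring
    refine T_congr _ _ _ _ hD (swap3 h1 h2 h3).1 ?_
    rw [V, V', hD]
    exact ⟨fun h => ⟨hP, h.2⟩, fun h => ⟨c1.2 hQ, h.2⟩⟩
  · rw [V]; exact fun h => hQ (c1.1 h.1)
  · rw [V']; exact fun h => hP h.1

lemma I2 (h1 : p ≠ q) (h2 : p ≠ r) (h3 : q ≠ r) :
    (if cycIoo (x p) (x r) (x q) then T σO σX j x p q q r else 0) =
    (if cycIoo p r q then T σO σX j x q r p r else 0) := by
  obtain ⟨b1, b2, b3, b4, b5⟩ := bits h1 h2 h3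
  obtain ⟨c1, c2, c3, c4, c5⟩ := bits (x.injective.ne h1) (x.injective.ne h2) (x.injective.ne h3)
  have V := vB x h1 h2 h3
  have V' := vD x h1 h2 h3
  refine bit_congr (n := n) (fun hP hQ => ?_) (fun hP hQ => T_zero σO σX j x ?_) (fun hP hQ => T_zero σO σX j x ?_)
  · have hD : Dm x p q q r = Dm x q r p r := by
      funext k
      simp only [Dm, Rm, Pi.add_apply, Equiv.Perm.mul_apply, Equiv.swap_apply_left,
        Equiv.swap_apply_right, Equiv.swap_apply_of_ne_of_ne h1 h2,
        Equiv.swap_apply_of_ne_of_ne h2.symm h3.symm]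
      rw [ci_add hP, ci_add hQ]
      ring
    refine T_congr _ _ _ _ hD (swap3 h1 h2 h3).2.1 ?_
    rw [V, V', hD]
    exact ⟨fun h => ⟨hP, h.2⟩, fun h => ⟨hQ, h.2⟩⟩
  · rw [V]; exact fun h => hQ h.1
  · rw [V']; exact fun h => hP h.1

lemma I3 (h1 : p ≠ q) (h2 : p ≠ r) (h3 : q ≠ r) :
    (if cycIoo p r q then T σO σX j x p q p r else 0) =
    (if cycIoo (x p) (x r) (x q) then T σO σX j x q r p q else 0) := by
  obtain ⟨b1, b2, b3, b4, b5⟩ := bits h1 h2 h3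
  obtain ⟨c1, c2, c3, c4, c5⟩ := bits (x.injective.ne h1) (x.injective.ne h2) (x.injective.ne h3)
  have V := vA x h1 h2 h3
  have V' := vC x h1 h2 h3
  refine bit_congr (n := n) (fun hP hQ => ?_) (fun hP hQ => T_zero σO σX j x ?_) (fun hP hQ => T_zero σO σX j x ?_)
  · have hD : Dm x p q p r = Dm x q r p q := by
      funext k
      simp only [Dm, Rm, Pi.add_apply, Equiv.Perm.mul_apply, Equiv.swap_apply_left,
        Equiv.swap_apply_right, Equiv.swap_apply_of_ne_of_ne h1 h2,
        Equiv.swap_apply_of_ne_of_ne h2.symm h3.symm]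
      rw [ci_add hP, ci_add hQ]
      ring
    refine T_congr _ _ _ _ hD (swap3 h1 h2 h3).2.2.1 ?_
    rw [V, V', hD]
    exact ⟨fun h => ⟨hP, h.2⟩, fun h => ⟨hQ, h.2⟩⟩
  · rw [V]; exact fun h => hQ h.1
  · rw [V']; exact fun h => hP h.1

lemma I4 (h1 : p ≠ q) (h2 : p ≠ r) (h3 : q ≠ r) :
    (if ¬ cycIoo (x p) (x r) (x q) then T σO σX j x q r p q else 0) =
    (if cycIoo p r q then T σO σX j x p r q r else 0) := by
  obtain ⟨b1, b2, b3, b4, b5⟩ := bits h1 h2 h3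
  obtain ⟨c1, c2, c3, c4, c5⟩ := bits (x.injective.ne h1) (x.injective.ne h2) (x.injective.ne h3)
  have V := vC x h1 h2 h3
  have V' := vD x h1.symm h3 h2
  simp only [S3_swap' p q r] at V'
  refine bit_congr (n := n) (fun hP hQ => ?_) (fun hP hQ => T_zero σO σX j x ?_) (fun hP hQ => T_zero σO σX j x ?_)
  · have hD : Dm x q r p q = Dm x p r q r := by
      funext k
      simp only [Dm, Rm, Pi.add_apply, Equiv.Perm.mul_apply, Equiv.swap_apply_left,
        Equiv.swap_apply_right, Equiv.swap_apply_of_ne_of_ne h1 h2,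
        Equiv.swap_apply_of_ne_of_ne h1.symm h3]
      rw [ci_add hQ, ci_add (c2.2 hP)]
      ring
    refine T_congr _ _ _ _ hD (swap3 h1 h2 h3).2.2.2 ?_
    rw [V, V', hD]
    exact ⟨fun h => ⟨c2.2 hP, h.2⟩, fun h => ⟨hQ, h.2⟩⟩
  · rw [V]; exact fun h => hQ h.1
  · rw [V']; exact fun h => hP (c2.1 h.1)

end tri

def S4 (a b c d k : ZMod n) : Prop := k = a ∨ k = b ∨ k = c ∨ k = d

lemma forall_S4 {a b c d : ZMod n} {P : ZMod n → Prop} :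
    (∀ k, S4 a b c d k → P k) ↔ P a ∧ P b ∧ P c ∧ P d := by
  unfold S4
  constructor
  · intro h
    exact ⟨h _ (by simp), h _ (by simp), h _ (by simp), h _ (by simp)⟩
  · rintro ⟨h1, h2, h3, h4⟩ k (rfl | rfl | rfl | rfl) <;> assumption

lemma v4 (x : Equiv.Perm (ZMod n)) {a b c d : ZMod n} (h1 : a ≠ b) (h2 : a ≠ c) (h3 : a ≠ d)
    (h4 : b ≠ c) (h5 : b ≠ d) (h6 : c ≠ d) : Valid x a b c d ↔
    (¬ (cycIoo a b c ∧ cycIoo (x a) (x b) (x c)) ∧ ¬ (cycIoo a b d ∧ cycIoo (x a) (x b) (x d)) ∧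
     ¬ (cycIoo c d a ∧ cycIoo (x c) (x d) (x b)) ∧ ¬ (cycIoo c d b ∧ cycIoo (x c) (x d) (x a))) ∧
    ∀ k, ¬ S4 a b c d k → Dm x a b c d (k, x k) = 0 := by
  rw [valid_iff x _ _ _ _ (S4 a b c d) (by simp [S4]) (by simp [S4]) (by simp [S4]) (by simp [S4])]
  simp only [forall_S4, Equiv.Perm.mul_apply, Equiv.swap_apply_left, Equiv.swap_apply_right,
    Equiv.swap_apply_of_ne_of_ne h2.symm h4.symm, Equiv.swap_apply_of_ne_of_ne h3.symm h5.symm,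
    ioo_left, ioo_right]
  tauto

lemma T_disj (x : Equiv.Perm (ZMod n)) (σO σX : Equiv.Perm (ZMod n)) (j : ZMod n)
    {a b c d : ZMod n} (h1 : a ≠ b) (h2 : a ≠ c) (h3 : a ≠ d)
    (h4 : b ≠ c) (h5 : b ≠ d) (h6 : c ≠ d) : T σO σX j x a b c d = T σO σX j x c d a b := by
  have hD : Dm x a b c d = Dm x c d a b := by
    funext k
    simp only [Dm, Rm, Pi.add_apply, Equiv.Perm.mul_apply,
      Equiv.swap_apply_of_ne_of_ne h2.symm h4.symm, Equiv.swap_apply_of_ne_of_ne h3.symm h5.symm,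
      Equiv.swap_apply_of_ne_of_ne h2 h3, Equiv.swap_apply_of_ne_of_ne h4 h5]
    ring
  have hS : ∀ k, S4 c d a b k ↔ S4 a b c d k := by intro k; unfold S4; tauto
  refine T_congr _ _ _ _ hD ?_ ?_
  · ext k; simp only [Equiv.Perm.mul_apply, Equiv.swap_apply_def]; grind
  · rw [v4 x h1 h2 h3 h4 h5 h6, v4 x h6 h2.symm h4.symm h3.symm h5.symm h1, hD]
    simp only [hS]
    have e1 := ioo_four h1 h2 h3 h4 h5 h6
    have e2 := ioo_four' h1 h2 h3 h4 h5 h6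
    have i := x.injective
    have f1 := ioo_four (i.ne h1) (i.ne h2) (i.ne h3) (i.ne h4) (i.ne h5) (i.ne h6)
    have f2 := ioo_four' (i.ne h1) (i.ne h2) (i.ne h3) (i.ne h4) (i.ne h5) (i.ne h6)
    refine and_congr ?_ Iff.rfl
    clear hS hD
    generalize cycIoo a b c = A1 at *
    generalize cycIoo a b d = A2 at *
    generalize cycIoo c d a = A3 at *
    generalize cycIoo c d b = A4 at *
    generalize cycIoo (x a) (x b) (x c) = B1 at *
    generalize cycIoo (x a) (x b) (x d) = B2 at *
    generalize cycIoo (x c) (x d) (x a) = B3 at *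
    generalize cycIoo (x c) (x d) (x b) = B4 at *
    clear i h1 h2 h3 h4 h5 h6
    grind

lemma T_vert (hn : 1 < n) (σO σX : Equiv.Perm (ZMod n)) (j x) (a b : ZMod n) :
    T σO σX j x a b a b = if a = j ∧ b = j + 1 then
      Finsupp.single x (MvPolynomial.X j : GridRing n) else 0 := by
  by_cases hab : a = b
  · rw [T_zero _ _ _ _ (fun h => h.1 hab), if_neg]
    rintro ⟨h1, h2⟩
    have : Fact (1 < n) := ⟨hn⟩
    rw [← hab, h1] at h2
    simp at h2
  have hD : Dm x a b a b = fun q => ci a b q.1 := by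
    funext q
    simp only [Dm, Rm, Pi.add_apply, Equiv.Perm.mul_apply, Equiv.swap_apply_left,
      Equiv.swap_apply_right]
    rw [← mul_add, ci_compl (x.injective.ne hab), mul_one]
  unfold T
  rw [hD]
  by_cases h : a = j ∧ b = j + 1
  · obtain ⟨rfl, rfl⟩ := h
    have hx : xv σX (fun q : ZMod n × ZMod n => ci a (a+1) q.1) = Pi.single a 1 := by
      funext k
      simp only [xv, ci_succ hn, Pi.single_apply]
    rw [if_pos, if_pos ⟨rfl, rfl⟩]
    · rw [mul_assoc, Equiv.swap_mul_self, mul_one]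
      congr 1
      simp [wt, ci_succ hn]
    · refine ⟨⟨hab, hab, ?_, ?_⟩, hx⟩ <;> exact fun k hk => ioo_succ hn _ _ hk.1
  · rw [if_neg h, if_neg]
    rintro ⟨_, hx⟩
    apply h
    apply ci_single hab
    intro k
    have := congrFun hx k
    simpa [xv, Pi.single_apply] using this

lemma T_horiz (hn : 1 < n) (σO σX : Equiv.Perm (ZMod n)) (i j x) (hij : σX j = σO i)
    (a b : ZMod n) :
    T σO σX j x a b b a = if a = x⁻¹ (σX j) ∧ b = x⁻¹ (σX j + 1) then
      Finsupp.single x (MvPolynomial.X i : GridRing n) else 0 := by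
  have hiff : (a = x⁻¹ (σX j) ∧ b = x⁻¹ (σX j + 1)) ↔ (x a = σX j ∧ x b = σX j + 1) := by
    rw [Equiv.Perm.eq_inv_iff_eq, Equiv.Perm.eq_inv_iff_eq]
  by_cases hab : a = b
  · rw [T_zero _ _ _ _ (fun h => h.1 hab), if_neg]
    rw [hiff]
    rintro ⟨h1, h2⟩
    have : Fact (1 < n) := ⟨hn⟩
    rw [← hab, h1] at h2
    simp at h2
  have hD : Dm x a b b a = fun q => ci (x a) (x b) q.2 := by
    funext q
    simp only [Dm, Rm, Pi.add_apply, Equiv.Perm.mul_apply, Equiv.swap_apply_left,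
      Equiv.swap_apply_right]
    rw [← add_mul, ci_compl hab, one_mul]
  unfold T
  rw [hD]
  by_cases h : (x a = σX j ∧ x b = σX j + 1)
  · rw [if_pos, if_pos (hiff.2 h)]
    · rw [mul_assoc, Equiv.swap_comm b a, Equiv.swap_mul_self, mul_one]
      congr 1
      rw [h.1, h.2, hij]
      simp [wt, ci_succ hn]
    · refine ⟨⟨hab, Ne.symm hab, ?_, ?_⟩, ?_⟩
      · intro k hk
        rw [h.1, h.2] at hk
        exact ioo_succ hn _ _ hk.2
      · intro k hk
        simp only [Equiv.Perm.mul_apply, Equiv.swap_apply_left, Equiv.swap_apply_right] at hk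
        rw [h.1, h.2] at hk
        exact ioo_succ hn _ _ hk.2
      · funext k
        rw [h.1, h.2]
        simp only [xv, ci_succ hn, Pi.single_apply, σX.injective.eq_iff]
  · rw [if_neg (fun h' => h (hiff.1 h')), if_neg]
    rintro ⟨_, hx⟩
    apply h
    apply ci_single (x.injective.ne hab)
    intro k
    have := congrFun hx (σX⁻¹ k)
    simpa [xv, Pi.single_apply, Equiv.symm_apply_eq] using this

lemma add_self_C (c : GridC n) : c + c = 0 := by
  have h2 : (2 : GridRing n) = 0 := CharTwo.two_eq_zero
  have : c + c = (2 : GridRing n) • c := by rw [two_smul]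
  rw [this, h2, zero_smul]

def Dst (p q r : ZMod n) : Prop := p ≠ q ∧ p ≠ r ∧ q ≠ r

def Dsj (a b c d : ZMod n) : Prop := a ≠ b ∧ a ≠ c ∧ a ≠ d ∧ b ≠ c ∧ b ≠ d ∧ c ≠ d

lemma T_split (σO σX : Equiv.Perm (ZMod n)) (j x) (a b c d : ZMod n) :
    T σO σX j x a b c d =
      (if Dsj a b c d then T σO σX j x a b c d else 0)
      + (if c = a then if d = b then T σO σX j x a b a b else 0 else 0)
      + (if c = b then if d = a then T σO σX j x a b b a else 0 else 0)
      + (if c = a then if Dst a b d then T σO σX j x a b a d else 0 else 0)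
      + (if c = b then if Dst a b d then T σO σX j x a b b d else 0 else 0)
      + (if d = a then if Dst a b c then T σO σX j x a b c a else 0 else 0)
      + (if d = b then if Dst a b c then T σO σX j x a b c b else 0 else 0) := by
  by_cases hab : a = b
  · have h0 : ∀ c d, T σO σX j x a b c d = 0 := fun c d => T_zero _ _ _ _ (fun h => h.1 hab)
    simp [h0]
  by_cases hcd : c = d
  · have h0 : T σO σX j x a b c d = 0 := T_zero _ _ _ _ (fun h => h.2.1 hcd)
    subst hcd
    by_cases h1 : c = a
    · subst h1
      simp [h0, Dsj, Dst, hab]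
    · by_cases h2 : c = b
      · subst h2
        simp [h0, Dsj, Dst, h1]
      · simp [Dsj, h1, h2, h0]
  have hba : ¬ b = a := fun h => hab h.symm
  have hdc : ¬ d = c := fun h => hcd h.symm
  unfold Dsj Dst
  by_cases h1 : c = a
  · subst h1
    by_cases h2 : d = b
    · subst h2; simp [hab, hba]
    · have h2' : ¬ b = d := fun h => h2 h.symm
      simp [hab, hcd, hdc, h2, h2']
  · have h1' : ¬ a = c := fun h => h1 h.symm
    by_cases h2 : c = b
    · subst h2
      by_cases h3 : d = a
      · subst h3; simp [hab, hba]
      · have h3' : ¬ a = d := fun h => h3 h.symm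
        simp [hab, hba, hcd, hdc, h3, h3']
    · have h2' : ¬ b = c := fun h => h2 h.symm
      by_cases h3 : d = a
      · subst h3; simp [hab, hcd, hdc, h1', h2, h2']
      · have h3' : ¬ a = d := fun h => h3 h.symm
        by_cases h4 : d = b
        · subst h4; simp [hab, hba, hcd, hdc, h1, h1']
        · have h4' : ¬ b = d := fun h => h4 h.symm
          simp [hab, hcd, h1, h2, h3, h4, h1', h2', h3', h4']

lemma sum_disj (σO σX : Equiv.Perm (ZMod n)) (j x) :
    ∑ a, ∑ b, ∑ c, ∑ d, (if Dsj a b c d then T σO σX j x a b c d else 0) = 0 := by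
  have : ∑ a, ∑ b, ∑ c, ∑ d, (if Dsj a b c d then T σO σX j x a b c d else 0)
      = ∑ s : (ZMod n × ZMod n) × (ZMod n × ZMod n),
        (if Dsj s.1.1 s.1.2 s.2.1 s.2.2 then T σO σX j x s.1.1 s.1.2 s.2.1 s.2.2 else 0) := by
    simp only [Fintype.sum_prod_type]
  rw [this]
  have hsy : ∀ a b c d : ZMod n, Dsj a b c d ↔ Dsj c d a b := by
    intro a b c d; unfold Dsj; grind
  refine Finset.sum_involution (fun s _ => s.swap) ?_ ?_ ?_ ?_
  · rintro ⟨⟨a, b⟩, ⟨c, d⟩⟩ _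
    simp only [Prod.swap]
    by_cases h : Dsj a b c d
    · rw [if_pos h, if_pos ((hsy _ _ _ _).1 h)]
      obtain ⟨h1, h2, h3, h4, h5, h6⟩ := h
      rw [T_disj x σO σX j h1 h2 h3 h4 h5 h6]
      exact add_self_C _
    · rw [if_neg h, if_neg (fun h' => h ((hsy _ _ _ _).2 h')), add_zero]
  · rintro ⟨⟨a, b⟩, ⟨c, d⟩⟩ _ hne heq
    apply hne
    simp only [Prod.swap, Prod.mk.injEq] at heq
    rw [if_neg]
    intro h
    exact h.2.1 heq.1.1.symm
  · simp
  · simp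

lemma ite_compl (P : Prop) (s : GridC n) : s = (if P then s else 0) + (if ¬ P then s else 0) := by
  by_cases h : P <;> simp [h]

lemma tri_pt (σO σX : Equiv.Perm (ZMod n)) (j x) (p q r : ZMod n) :
    (if Dst p q r then T σO σX j x p q q r else 0) + (if Dst p q r then T σO σX j x q r p q else 0)
    = (if Dst p q r ∧ cycIoo p r q then T σO σX j x p r p q else 0)
    + (if Dst p q r ∧ cycIoo p r q then T σO σX j x q r p r else 0)
    + (if Dst p q r ∧ cycIoo p r q then T σO σX j x p q p r else 0)
    + (if Dst p q r ∧ cycIoo p r q then T σO σX j x p r q r else 0) := by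
  by_cases h : Dst p q r
  · simp only [h, true_and, if_true]
    obtain ⟨h1, h2, h3⟩ := h
    rw [I1 x σO σX j h1 h2 h3, ← I2 x σO σX j h1 h2 h3, I3 x σO σX j h1 h2 h3,
      ← I4 x σO σX j h1 h2 h3]
    by_cases hb : cycIoo (x p) (x r) (x q) <;> simp [hb]
  · simp [h]

lemma Dst_ioo (p q r : ZMod n) : (Dst p r q ∧ cycIoo p q r) ↔ (Dst p q r ∧ ¬ cycIoo p r q) := by
  constructor
  · rintro ⟨⟨h1, h2, h3⟩, h⟩
    exact ⟨⟨h2, h1, h3.symm⟩, (ioo_not h2 h1 h3.symm).1 h⟩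
  · rintro ⟨⟨h1, h2, h3⟩, h⟩
    exact ⟨⟨h2, h1, h3.symm⟩, (ioo_not h1 h2 h3).2 h⟩

lemma Dst_ioo' (p q r : ZMod n) : (Dst q p r ∧ cycIoo q r p) ↔ (Dst p q r ∧ ¬ cycIoo p r q) := by
  constructor
  · rintro ⟨⟨h1, h2, h3⟩, h⟩
    exact ⟨⟨h1.symm, h3, h2⟩, (bits h1.symm h3 h2).2.1.1 h⟩
  · rintro ⟨⟨h1, h2, h3⟩, h⟩
    exact ⟨⟨h1.symm, h3, h2⟩, (bits h1 h2 h3).2.1.2 h⟩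

lemma sum_A (σO σX : Equiv.Perm (ZMod n)) (j x) :
    ∑ p, ∑ q, ∑ r, (if Dst p q r then T σO σX j x p q p r else 0) =
    ∑ p, ∑ q, ∑ r, (if Dst p q r ∧ cycIoo p r q then T σO σX j x p r p q else 0) +
    ∑ p, ∑ q, ∑ r, (if Dst p q r ∧ cycIoo p r q then T σO σX j x p q p r else 0) := by
  rw [← Finset.sum_add_distrib]
  refine Finset.sum_congr rfl fun p _ => ?_
  rw [Finset.sum_comm (f := fun q r => if Dst p q r ∧ cycIoo p r q then T σO σX j x p r p q else 0)]
  simp only [← Finset.sum_add_distrib]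
  refine Finset.sum_congr rfl fun q _ => Finset.sum_congr rfl fun r _ => ?_
  simp only [Dst_ioo p q r]
  by_cases h : Dst p q r <;> by_cases h' : cycIoo p r q <;> simp [h, h']

lemma sum_D (σO σX : Equiv.Perm (ZMod n)) (j x) :
    ∑ p, ∑ q, ∑ r, (if Dst p q r then T σO σX j x q r p r else 0) =
    ∑ p, ∑ q, ∑ r, (if Dst p q r ∧ cycIoo p r q then T σO σX j x q r p r else 0) +
    ∑ p, ∑ q, ∑ r, (if Dst p q r ∧ cycIoo p r q then T σO σX j x p r q r else 0) := by
  rw [Finset.sum_comm (f := fun p q => ∑ r, if Dst p q r ∧ cycIoo p r q then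
    T σO σX j x p r q r else 0)]
  simp only [← Finset.sum_add_distrib]
  refine Finset.sum_congr rfl fun p _ => Finset.sum_congr rfl fun q _ =>
    Finset.sum_congr rfl fun r _ => ?_
  simp only [Dst_ioo' p q r]
  by_cases h : Dst p q r <;> by_cases h' : cycIoo p r q <;> simp [h, h']

lemma sum_tri (σO σX : Equiv.Perm (ZMod n)) (j x) :
    ∑ p, ∑ q, ∑ r, (if Dst p q r then T σO σX j x p q p r else 0) +
    ∑ p, ∑ q, ∑ r, (if Dst p q r then T σO σX j x p q q r else 0) +
    ∑ p, ∑ q, ∑ r, (if Dst p q r then T σO σX j x p q r p else 0) +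
    ∑ p, ∑ q, ∑ r, (if Dst p q r then T σO σX j x p q r q else 0) = 0 := by
  have hC : ∑ p, ∑ q, ∑ r, (if Dst p q r then T σO σX j x p q r p else 0) =
      ∑ p, ∑ q, ∑ r, (if Dst p q r then T σO σX j x q r p q else 0) := by
    calc _ = ∑ p, ∑ r, ∑ q, (if Dst p q r then T σO σX j x p q r p else 0) :=
          Finset.sum_congr rfl fun p _ => Finset.sum_comm
      _ = ∑ r, ∑ p, ∑ q, (if Dst p q r then T σO σX j x p q r p else 0) := Finset.sum_comm
      _ = _ := by
        refine Finset.sum_congr rfl fun p _ => Finset.sum_congr rfl fun q _ =>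
          Finset.sum_congr rfl fun r _ => if_congr ?_ rfl rfl
        unfold Dst; grind
  have hD : ∑ p, ∑ q, ∑ r, (if Dst p q r then T σO σX j x p q r q else 0) =
      ∑ p, ∑ q, ∑ r, (if Dst p q r then T σO σX j x q r p r else 0) := by
    calc _ = ∑ p, ∑ r, ∑ q, (if Dst p q r then T σO σX j x p q r q else 0) :=
          Finset.sum_congr rfl fun p _ => Finset.sum_comm
      _ = ∑ r, ∑ p, ∑ q, (if Dst p q r then T σO σX j x p q r q else 0) := Finset.sum_comm
      _ = _ := by
        refine Finset.sum_congr rfl fun p _ => Finset.sum_congr rfl fun q _ =>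
          Finset.sum_congr rfl fun r _ => if_congr ?_ rfl rfl
        unfold Dst; grind
  have hBC : ∑ p, ∑ q, ∑ r, (if Dst p q r then T σO σX j x p q q r else 0) +
      ∑ p, ∑ q, ∑ r, (if Dst p q r then T σO σX j x q r p q else 0) =
      ∑ p, ∑ q, ∑ r, (if Dst p q r ∧ cycIoo p r q then T σO σX j x p r p q else 0)
    + ∑ p, ∑ q, ∑ r, (if Dst p q r ∧ cycIoo p r q then T σO σX j x q r p r else 0)
    + ∑ p, ∑ q, ∑ r, (if Dst p q r ∧ cycIoo p r q then T σO σX j x p q p r else 0)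
    + ∑ p, ∑ q, ∑ r, (if Dst p q r ∧ cycIoo p r q then T σO σX j x p r q r else 0) := by
    simp only [← Finset.sum_add_distrib]
    exact Finset.sum_congr rfl fun p _ => Finset.sum_congr rfl fun q _ =>
          Finset.sum_congr rfl fun r _ => tri_pt σO σX j x p q r
  rw [hC, hD, add_assoc (∑ p, ∑ q, ∑ r, (if Dst p q r then T σO σX j x p q p r else 0)), hBC,
    sum_A, sum_D]
  generalize ∑ p, ∑ q, ∑ r, (if Dst p q r ∧ cycIoo p r q then T σO σX j x p r p q else 0) = A
  generalize ∑ p, ∑ q, ∑ r, (if Dst p q r ∧ cycIoo p r q then T σO σX j x q r p r else 0) = B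
  generalize ∑ p, ∑ q, ∑ r, (if Dst p q r ∧ cycIoo p r q then T σO σX j x p q p r else 0) = C
  generalize ∑ p, ∑ q, ∑ r, (if Dst p q r ∧ cycIoo p r q then T σO σX j x p r q r else 0) = D
  have : A + C + (A + B + C + D) + (B + D) = (A + A) + (B + B) + (C + C) + (D + D) := by abel
  rw [this]
  simp only [add_self_C, add_zero]

lemma sum_T (hn : 1 < n) (σO σX : Equiv.Perm (ZMod n)) (i j x) (hij : σX j = σO i) :
    ∑ a, ∑ b, ∑ c, ∑ d, T σO σX j x a b c d =
      Finsupp.single x (MvPolynomial.X j : GridRing n) +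
      Finsupp.single x (MvPolynomial.X i : GridRing n) := by
  have e : ∑ a, ∑ b, ∑ c, ∑ d, T σO σX j x a b c d = _ :=
    Finset.sum_congr rfl fun a _ => Finset.sum_congr rfl fun b _ => Finset.sum_congr rfl fun c _ =>
      Finset.sum_congr rfl fun d _ => T_split σO σX j x a b c d
  rw [e]
  simp only [Finset.sum_add_distrib]
  rw [sum_disj]
  have k1 : ∀ (F : ZMod n → ZMod n → GridC n) (a : ZMod n),
      ∑ c, ∑ d, (if c = a then F c d else 0) = ∑ d, F a d := by
    intro F a
    rw [Finset.sum_comm]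
    simp
  have k2 : ∀ (a b : ZMod n) (t : GridC n),
      ∑ c, ∑ d, (if c = a then if d = b then t else 0 else 0) = t := by
    intro a b t
    rw [k1]; simp
  have k3 : ∀ (F : ZMod n → GridC n) (a : ZMod n),
      ∑ c, ∑ d, (if c = a then F d else 0) = ∑ d, F d := by
    intro F a
    rw [Finset.sum_comm]
    simp
  have k4 : ∀ (F : ZMod n → GridC n) (a : ZMod n),
      ∑ c, ∑ d, (if d = a then F c else 0) = ∑ c, F c := by
    intro F a
    simp
  have v1 : ∑ a, ∑ b, T σO σX j x a b a b = Finsupp.single x (MvPolynomial.X j : GridRing n) := by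
    simp only [T_vert hn, ite_and]
    exact k2 _ _ _
  have v2 : ∑ a, ∑ b, T σO σX j x a b b a = Finsupp.single x (MvPolynomial.X i : GridRing n) := by
    simp only [T_horiz hn σO σX i j x hij, ite_and]
    exact k2 _ _ _
  simp only [k2, k3, k4]
  rw [v1, v2]
  have := sum_tri σO σX j x
  rw [zero_add, add_assoc, add_assoc, add_assoc, ← add_assoc (∑ p, ∑ q, ∑ r, _), ← add_assoc (∑ p, ∑ q, ∑ r, _ + _)]
  rw [this, add_zero]

lemma homotopy_step (hn : 1 < n) (σO σX : Equiv.Perm (ZMod n)) (i j) (hij : σX j = σO i) :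
    Umul n i - Umul n j = gridDiff σO σX ∘ₗ op σO σX (Pi.single j 1) +
      op σO σX (Pi.single j 1) ∘ₗ gridDiff σO σX := by
  rw [gridDiff_eq]
  refine Finsupp.lhom_ext' fun x => LinearMap.ext_ring ?_
  have h := (op_sum σO σX j x).trans (sum_T hn σO σX i j x hij)
  simp only [LinearMap.comp_apply, LinearMap.add_apply, LinearMap.sub_apply,
    Finsupp.lsingle_apply, op_single, one_smul]
  rw [h]
  simp only [Umul, LinearMap.smul_apply, LinearMap.id_apply, Finsupp.smul_single, smul_eq_mul,
    mul_one]
  rw [sub_eq_iff_eq_add, add_comm (Finsupp.single x (MvPolynomial.X j)), add_assoc, add_self_C,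
    add_zero]

lemma homotopy_exists (σO σX : Equiv.Perm (ZMod n)) (i j : ZMod n)
    (h : (σX⁻¹ * σO).SameCycle i j) :
    ∃ H : GridC n →ₗ[GridRing n] GridC n,
      Umul n i - Umul n j = gridDiff σO σX ∘ₗ H + H ∘ₗ gridDiff σO σX := by
  rcases Nat.lt_or_ge 1 n with hn | hn
  · obtain ⟨m, hm⟩ := h.exists_nat_pow_eq
    clear h
    induction m generalizing j with
    | zero =>
      simp only [pow_zero, Equiv.Perm.one_apply] at hm
      subst hm
      exact ⟨0, LinearMap.ext fun c => by
        rw [LinearMap.comp_zero, LinearMap.zero_comp, add_zero, LinearMap.sub_apply, LinearMap.zero_apply, sub_self]⟩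
    | succ m ih =>
      obtain ⟨H, hH⟩ := ih _ rfl
      have hs := homotopy_step hn σO σX (((σX⁻¹ * σO) ^ m) i) j (by
        rw [← hm, pow_succ']; simp [Equiv.Perm.mul_apply])
      refine ⟨H + op σO σX (Pi.single j 1), ?_⟩
      rw [← sub_add_sub_cancel _ (Umul n (((σX⁻¹ * σO) ^ m) i)), hH, hs, LinearMap.comp_add,
        LinearMap.add_comp]
      abel
  · have hn1 : n = 1 := by have := NeZero.ne n; omega
    subst hn1
    have : i = j := Subsingleton.elim (α := Fin 1) i j
    subst this
    exact ⟨0, LinearMap.ext fun c => by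
        rw [LinearMap.comp_zero, LinearMap.zero_comp, add_zero, LinearMap.sub_apply, LinearMap.zero_apply, sub_self]⟩

end aux

theorem Umul_chain_homotopic (n : ℕ) [NeZero n]
    (σO σX : Equiv.Perm (ZMod n)) (i j : ZMod n)
    -- `O_i` and `O_j` lie on the same link component: `i` and `j` are in the
    -- same orbit of the permutation `σX⁻¹ ∘ σO`:
    (h : (σX⁻¹ * σO).SameCycle i j) :
    -- `U_i` and `U_j` are chain homotopic …
    (∃ H : GridC n →ₗ[GridRing n] GridC n,
      Umul n i - Umul n j =
        gridDiff σO σX ∘ₗ H + H ∘ₗ gridDiff σO σX) ∧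
    -- … in particular they induce the same endomorphism of homology:
    (∀ c : GridC n, gridDiff σO σX c = 0 →
      ∃ d : GridC n, gridDiff σO σX d = Umul n i c - Umul n j c) := by
  obtain ⟨H, hH⟩ := homotopy_exists σO σX i j h
  refine ⟨⟨H, hH⟩, fun c hc => ⟨H c, ?_⟩⟩
  have := LinearMap.congr_fun hH c
  simp only [LinearMap.sub_apply, LinearMap.add_apply, LinearMap.comp_apply, hc, map_zero,
    add_zero] at this
  exact this.symm

end GridDiagrams
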